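/- For every integer n ≥ 3, Σ_{k ∈ ℤ} 1/(4k+1)^n = π^n · vol(C_n) / 2^n, where the series over all integers k is absolutely convergent. In particular, 1 − 1/3³ + 1/5³ − 1/7³ + ⋯ = π³/32 and 1 + 1/3⁴ + 1/5⁴ + 1/7⁴ + ⋯ = π⁴/96. -/

import Mathlib

open MeasureTheory Real

/-- The graph polytope volume: `vol(G)` is the Lebesgue volume of
`{x ∈ [0,1]^V : x_i + x_j ≤ 1 for every edge ij of G}`. -/
noncomputable def gvol {V : Type*} [Fintype V] (G : SimpleGraph V) : ℝ :=
  (volume {x : V → ℝ | (∀ i, x i ∈ Set.Icc (0:ℝ) 1) ∧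
      ∀ ⦃i j⦄, G.Adj i j → x i + x j ≤ 1}).toReal

/-- The cycle `C_n` on vertex set `{1,…,n}` with edges `i(i+1)` (cyclically, mod n). -/
def cycG (n : ℕ) : SimpleGraph (Fin n) :=
  SimpleGraph.fromRel (fun i j => ((i : ℕ) + 1) % n = (j : ℕ))

noncomputable def cc (k : ℤ) : ℝ := ((4 * k + 1 : ℤ) : ℝ) * (π / 2)

lemma four_enat (k : ℤ) : ((4 * k + 1 : ℤ) : ℝ) =
    (-1) ^ (Equiv.intEquivNat k) * ((2 * (Equiv.intEquivNat k : ℕ) + 1 : ℕ) : ℝ) := by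
  cases k with
  | ofNat j =>
    have : Equiv.intEquivNat (Int.ofNat j) = 2 * j := rfl
    rw [this]; simp; ring
  | negSucc j =>
    have : Equiv.intEquivNat (Int.negSucc j) = 2 * j + 1 := rfl
    rw [this, pow_succ, pow_mul]; simp [Int.negSucc_eq]; ring

lemma four_ne (k : ℤ) : ((4 * k + 1 : ℤ) : ℝ) ≠ 0 := by
  have : (4 * k + 1 : ℤ) ≠ 0 := by omega
  exact_mod_cast this

lemma cc_ne (k : ℤ) : cc k ≠ 0 := mul_ne_zero (four_ne k) (by positivity)

lemma summ_abs (n : ℕ) (hn : 2 ≤ n) :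
    Summable (fun k : ℤ => |(1 : ℝ) / ((4 * k + 1 : ℤ) : ℝ) ^ n|) := by
  have h1 : Summable (fun m : ℕ => (1:ℝ) / ((2 * m + 1 : ℕ) : ℝ) ^ n) :=
    (Real.summable_one_div_nat_pow.mpr (by omega : 1 < n)).comp_injective
      (i := fun m : ℕ => 2 * m + 1) (fun a b h => by simpa using h)
  have h2 := (Equiv.intEquivNat.summable_iff).mpr h1
  refine h2.congr (fun k => ?_)
  rw [four_enat k]
  simp only [Function.comp, abs_div, abs_pow, abs_mul, abs_neg, abs_one, one_pow, one_mul,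
    Nat.abs_cast]

lemma one_div_cc (m : ℕ) (k : ℤ) :
    (1 / cc k) ^ m = (2 / π) ^ m * (1 / ((4 * k + 1 : ℤ) : ℝ) ^ m) := by
  have := four_ne k
  unfold cc
  rw [div_pow, div_pow, mul_pow, div_pow, one_pow]
  field_simp

lemma summ_cc (m : ℕ) (hm : 2 ≤ m) : Summable (fun k : ℤ => |(1 / cc k) ^ m|) := by
  refine ((summ_abs m hm).mul_left ((2 / π) ^ m)).congr (fun k => ?_)
  rw [one_div_cc, abs_mul, abs_of_nonneg (a := (2 / π) ^ m) (by positivity)]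

lemma sin_cc (k : ℤ) : Real.sin (cc k) = 1 := by
  have : cc k = π / 2 + k * (2 * π) := by unfold cc; push_cast; ring
  rw [this, Real.sin_add_int_mul_two_pi, Real.sin_pi_div_two]

lemma cos_cc (k : ℤ) : Real.cos (cc k) = 0 := by
  have : cc k = π / 2 + k * (2 * π) := by unfold cc; push_cast; ring
  rw [this, Real.cos_add_int_mul_two_pi, Real.cos_pi_div_two]

noncomputable def tm (m : ℕ) (k : ℤ) (x y : ℝ) : ℝ :=
  2 * (1 / cc k) ^ m * Real.cos (cc k * x) * Real.cos (cc k * y)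

noncomputable def Psi (m : ℕ) (x y : ℝ) : ℝ := ∑' k : ℤ, tm m k x y

lemma tm_bound (m : ℕ) (k : ℤ) (x y : ℝ) : ‖tm m k x y‖ ≤ 2 * |(1 / cc k) ^ m| := by
  unfold tm
  rw [Real.norm_eq_abs, abs_mul, abs_mul, abs_mul, abs_two]
  have h1 := Real.abs_cos_le_one (cc k * x)
  have h2 := Real.abs_cos_le_one (cc k * y)
  have h3 : 0 ≤ 2 * |(1 / cc k) ^ m| := by positivity
  calc _ ≤ 2 * |(1 / cc k) ^ m| * 1 * 1 := by gcongr
    _ = _ := by ring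

lemma tm_summable (m : ℕ) (hm : 2 ≤ m) (x y : ℝ) : Summable (fun k => tm m k x y) :=
  Summable.of_norm_bounded ((summ_cc m hm).mul_left 2) (fun k => tm_bound m k x y)

lemma tm_cont (m : ℕ) (k : ℤ) : Continuous (fun p : ℝ × ℝ => tm m k p.1 p.2) := by
  unfold tm; fun_prop

lemma Psi_cont (m : ℕ) (hm : 2 ≤ m) : Continuous (fun p : ℝ × ℝ => Psi m p.1 p.2) :=
  continuous_tsum (fun k => tm_cont m k) ((summ_cc m hm).mul_left 2)
    (fun k p => tm_bound m k p.1 p.2)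

lemma int_sum (m : ℕ) (hm : 2 ≤ m) (f g : ℝ → ℝ) (hf : Continuous f) (hg : Continuous g) (a b : ℝ) :
    HasSum (fun k => ∫ z in a..b, tm m k (f z) (g z)) (∫ z in a..b, Psi m (f z) (g z)) := by
  refine intervalIntegral.hasSum_integral_of_dominated_convergence
    (fun k _ => 2 * |(1 / cc k) ^ m|) (fun k => ?_) (fun k => ?_) ?_ ?_ ?_
  · exact ((tm_cont m k).comp (hf.prodMk hg)).aestronglyMeasurable
  · exact Filter.Eventually.of_forall (fun t _ => tm_bound m k _ _)
  · exact Filter.Eventually.of_forall (fun t _ => (summ_cc m hm).mul_left 2)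
  · exact intervalIntegrable_const
  · exact Filter.Eventually.of_forall (fun t _ => (tm_summable m hm _ _).hasSum)

lemma int_tm (m : ℕ) (k : ℤ) (x y : ℝ) : ∫ z in (0:ℝ)..(1 - x), tm m k z y = tm (m+1) k x y := by
  have hc := cc_ne k
  have : ∀ z, tm m k z y = (2 * (1 / cc k) ^ m * Real.cos (cc k * y)) * Real.cos (cc k * z) := by
    intro z; unfold tm; ring
  simp_rw [this]
  rw [intervalIntegral.integral_const_mul, intervalIntegral.integral_comp_mul_left _ hc, integral_cos,
    mul_zero, Real.sin_zero, mul_sub, mul_one, Real.sin_sub, sin_cc, cos_cc, smul_eq_mul]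
  unfold tm
  rw [pow_succ]
  ring

lemma Psi_succ (m : ℕ) (hm : 2 ≤ m) (x y : ℝ) :
    ∫ z in (0:ℝ)..(1 - x), Psi m z y = Psi (m+1) x y := by
  have := int_sum m hm (fun z => z) (fun _ => y) continuous_id continuous_const 0 (1 - x)
  simp only [int_tm] at this
  exact this.tsum_eq.symm

lemma Psi_trace (m : ℕ) (hm : 2 ≤ m) :
    ∫ z in (0:ℝ)..1, Psi m z z = ∑' k, (1 / cc k) ^ m := by
  have := int_sum m hm (fun z => z) (fun z => z) continuous_id continuous_id 0 1
  rw [← this.tsum_eq]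
  congr 1
  ext k
  have hc := cc_ne k
  have : ∀ z, tm m k z z = (2 * (1 / cc k) ^ m) * Real.cos (cc k * z) ^ 2 := by
    intro z; unfold tm; ring
  simp_rw [this]
  rw [intervalIntegral.integral_const_mul,
    intervalIntegral.integral_comp_mul_left (fun z => Real.cos z ^ 2) hc, integral_cos_sq]
  simp [cos_cc]
  field_simp

/-- Fourier series over odd integers -/
lemma odd_cos (x : ℝ) (h0 : 0 ≤ x) (h1 : x ≤ 1 / 2) :
    HasSum (fun m : ℕ => 1 / ((2 * m + 1 : ℕ) : ℝ) ^ 2 * Real.cos (2 * π * (2 * m + 1 : ℕ) * x))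
      (π ^ 2 / 8 * (1 - 4 * x)) := by
  have hA := hasSum_one_div_nat_pow_mul_cos (k := 1) one_ne_zero (x := x) ⟨h0, by linarith⟩
  have hB := hasSum_one_div_nat_pow_mul_cos (k := 1) one_ne_zero (x := 2 * x) ⟨by linarith, by linarith⟩
  have hE : HasSum (fun m : ℕ => 1 / ((2 * m : ℕ) : ℝ) ^ (2 * 1) * Real.cos (2 * π * (2 * m : ℕ) * x)) (1 / 4 * ((-1 : ℝ) ^ (1 + 1) * (2 * π) ^ (2 * 1) / 2 / (Nat.factorial (2 * 1) : ℝ) *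
        (Polynomial.map (algebraMap ℚ ℝ) (Polynomial.bernoulli (2 * 1))).eval (2 * x))) := by
    convert! hB.mul_left (1/4) using 1
    ext m
    have : 2 * π * ((2 * m : ℕ) : ℝ) * x = 2 * π * m * (2 * x) := by push_cast; ring
    rw [this]
    push_cast
    rw [mul_pow]
    field_simp
    ring
  have hO : Summable (fun m : ℕ => 1 / ((2 * m + 1 : ℕ) : ℝ) ^ (2 * 1) * Real.cos (2 * π * (2 * m + 1 : ℕ) * x)) :=
    hA.summable.comp_injective (i := fun m : ℕ => 2 * m + 1) (fun a b h => by simpa using h)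
  have h := (HasSum.even_add_odd (f := fun n : ℕ => 1 / (n : ℝ) ^ (2 * 1) * Real.cos (2 * π * n * x)) hE hO.hasSum).unique hA
  convert! hO.hasSum using 1
  rw [← eq_sub_iff_add_eq'] at h
  rw [h]
  have hb : ∀ y, (Polynomial.map (algebraMap ℚ ℝ) (Polynomial.bernoulli (2 * 1))).eval y = y ^ 2 - y + 6⁻¹ := by
    intro y
    rw [← bernoulliFun_two y]; rfl
  rw [hb, hb]
  simp
  ring

lemma odd_cos' (t : ℝ) (h : |t| ≤ 2) :
    HasSum (fun k : ℤ => (1 / cc k) ^ 2 * Real.cos (cc k * t)) ((1 - |t|) / 2) := by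
  have h1 := odd_cos (|t| / 4) (by positivity) (by linarith)
  have h2 := (Equiv.intEquivNat.hasSum_iff).mpr (h1.mul_left ((2 / π) ^ 2))
  convert! h2 using 1
  · ext k
    rw [one_div_cc, ← Real.cos_abs, abs_mul]
    have : |cc k| = ((2 * (Equiv.intEquivNat k : ℕ) + 1 : ℕ) : ℝ) * (π / 2) := by
      unfold cc
      rw [four_enat, abs_mul, abs_mul, abs_pow, abs_neg, abs_one, one_pow, one_mul, Nat.abs_cast,
        abs_of_nonneg (by positivity : 0 ≤ π / 2)]
    have e2 : ((4 * k + 1 : ℤ) : ℝ) ^ 2 = ((2 * (Equiv.intEquivNat k : ℕ) + 1 : ℕ) : ℝ) ^ 2 := by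
      rw [← sq_abs, four_enat, abs_mul, abs_pow, abs_neg, abs_one, one_pow, one_mul, Nat.abs_cast]
    rw [this, e2]
    simp only [Function.comp]
    rw [mul_assoc]
    congr 3
    ring
  · have := Real.pi_ne_zero
    field_simp
    ring

lemma Psi_two (x y : ℝ) (hx : x ∈ Set.Icc (0:ℝ) 1) (hy : y ∈ Set.Icc (0:ℝ) 1) :
    Psi 2 x y = min (1 - x) (1 - y) := by
  obtain ⟨hx0, hx1⟩ := hx
  obtain ⟨hy0, hy1⟩ := hy
  have h1 := odd_cos' (x - y) (by rw [abs_le]; constructor <;> linarith)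
  have h2 := odd_cos' (x + y) (by rw [abs_le]; constructor <;> linarith)
  have h := (h1.add h2).tsum_eq
  unfold Psi
  have e : ∀ k, tm 2 k x y = (1 / cc k) ^ 2 * Real.cos (cc k * (x - y))
      + (1 / cc k) ^ 2 * Real.cos (cc k * (x + y)) := by
    intro k
    unfold tm
    rw [mul_sub, mul_add, Real.cos_sub, Real.cos_add]
    ring
  simp_rw [e]
  rw [h, abs_of_nonneg (by linarith : 0 ≤ x + y)]
  rcases le_total x y with hxy | hxy
  · rw [abs_of_nonpos (by linarith), min_eq_right (by linarith)]; ring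
  · rw [abs_of_nonneg (by linarith), min_eq_left (by linarith)]; ring

lemma spec3 : ∑' m : ℕ, (-1 : ℝ) ^ m / ((2 * m + 1 : ℕ) : ℝ) ^ 3 = π ^ 3 / 32 := by
  have h := hasSum_L_function_mod_four_eval_three
  have hinj : Function.Injective (fun m : ℕ => 2 * m + 1) := fun a b h => by simpa using h
  rw [← hinj.hasSum_iff] at h
  · rw [← h.tsum_eq]
    congr 1
    ext m
    simp only [Function.comp]
    have : π * ((2 * m + 1 : ℕ) : ℝ) / 2 = π / 2 + m * π := by push_cast; ring
    rw [this, Real.sin_add_nat_mul_pi, Real.sin_pi_div_two]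
    ring
  · intro n hn
    rcases Nat.even_or_odd' n with ⟨c, rfl | rfl⟩
    · have : π * ((2 * c : ℕ) : ℝ) / 2 = c * π := by push_cast; ring
      rw [this, Real.sin_nat_mul_pi, mul_zero]
    · exact absurd ⟨c, rfl⟩ hn

lemma spec4 : ∑' m : ℕ, (1 : ℝ) / ((2 * m + 1 : ℕ) : ℝ) ^ 4 = π ^ 4 / 96 := by
  have hA := hasSum_zeta_four
  have hE : HasSum (fun m : ℕ => (1:ℝ) / ((2 * m : ℕ) : ℝ) ^ 4) (1 / 16 * (π ^ 4 / 90)) := by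
    convert! hA.mul_left (1/16) using 1
    ext m
    push_cast
    rw [mul_pow]
    field_simp
    norm_num
  have hO : Summable (fun m : ℕ => (1:ℝ) / ((2 * m + 1 : ℕ) : ℝ) ^ 4) :=
    hA.summable.comp_injective (i := fun m : ℕ => 2 * m + 1) (fun a b h => by simpa using h)
  have h := (HasSum.even_add_odd (f := fun n : ℕ => (1:ℝ) / (n : ℝ) ^ 4) hE hO.hasSum).unique hA
  linarith

def KK (a b : ℝ) : Prop := (0 ≤ a ∧ a ≤ 1) ∧ (0 ≤ b ∧ b ≤ 1) ∧ a + b ≤ 1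

def QQ (n : ℕ) (a : ℝ) (x : Fin n → ℝ) (b : ℝ) : Prop :=
  ∀ i : Fin (n + 1), KK ((Fin.cons a x : Fin (n + 1) → ℝ) i) ((Fin.snoc x b : Fin (n + 1) → ℝ) i)

lemma QQ_meas {α : Type*} [MeasurableSpace α] (n : ℕ) (f : α → ℝ) (g : α → Fin n → ℝ) (h : α → ℝ)
    (hf : Measurable f) (hg : Measurable g) (hh : Measurable h) :
    MeasurableSet {w | QQ n (f w) (g w) (h w)} := by
  unfold QQ
  rw [Set.ofPred_forall]
  refine MeasurableSet.iInter (fun i => ?_)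
  have h1 : Measurable (fun w => (Fin.cons (f w) (g w) : Fin (n + 1) → ℝ) i) := by
    refine Fin.cases ?_ (fun j => ?_) i
    · simpa using hf
    · simpa using measurable_pi_iff.mp hg j
  have h2 : Measurable (fun w => (Fin.snoc (g w) (h w) : Fin (n + 1) → ℝ) i) := by
    refine Fin.lastCases ?_ (fun j => ?_) i
    · simpa using hh
    · simpa using measurable_pi_iff.mp hg j
  unfold KK
  exact ((measurableSet_le measurable_const h1).inter (measurableSet_le h1 measurable_const)).inter
    (((measurableSet_le measurable_const h2).inter (measurableSet_le h2 measurable_const)).inter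
      (measurableSet_le (h1.add h2) measurable_const))

lemma QQ_zero (a b : ℝ) (x : Fin 0 → ℝ) : QQ 0 a x b ↔ KK a b := by
  unfold QQ
  constructor
  · intro h; simpa [Fin.snoc] using h 0
  · intro h i
    have : i = 0 := by ext; omega
    subst this
    simpa [Fin.snoc] using h

lemma QQ_succ (n : ℕ) (a b z : ℝ) (t : Fin n → ℝ) :
    QQ (n + 1) a (Fin.cons z t) b ↔ KK a z ∧ QQ n z t b := by
  unfold QQ
  rw [Fin.forall_fin_succ]
  have e : (Fin.snoc (Fin.cons z t : Fin (n + 1) → ℝ) b : Fin (n + 2) → ℝ) =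
      Fin.cons z (Fin.snoc t b : Fin (n + 1) → ℝ) := by
    rw [Fin.cons_snoc_eq_snoc_cons]
  rw [e]
  simp only [Fin.cons_zero, Fin.cons_succ]

lemma vol_succ (n : ℕ) (S : Set (Fin (n + 1) → ℝ)) (hS : MeasurableSet S) :
    volume S = ∫⁻ z : ℝ, volume {t : Fin n → ℝ | (Fin.cons z t : Fin (n + 1) → ℝ) ∈ S} := by
  have hm := (volume_preserving_piFinSuccAbove (fun _ : Fin (n + 1) => ℝ) 0).symm
  rw [← hm.measure_preimage hS.nullMeasurableSet, Measure.volume_eq_prod, Measure.prod_apply]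
  · congr 1
    ext z
    congr 1
    ext t
    simp only [Set.mem_preimage, Set.mem_ofPred_eq]
    rw [← Fin.insertNth_zero']
    rfl
  · exact hm.measurable hS

lemma QQ_rec (n : ℕ) (a b : ℝ) (ha : a ∈ Set.Icc (0:ℝ) 1) :
    volume {x : Fin (n + 1) → ℝ | QQ (n + 1) a x b} =
      ∫⁻ z in Set.Icc (0:ℝ) (1 - a), volume {t : Fin n → ℝ | QQ n z t b} := by
  rw [vol_succ _ {x : Fin (n + 1) → ℝ | QQ (n + 1) a x b}
      (QQ_meas (n + 1) (fun _ => a) (fun x => x) (fun _ => b)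
        measurable_const measurable_id measurable_const),
    ← lintegral_indicator measurableSet_Icc]
  congr 1
  ext z
  simp only [Set.mem_ofPred_eq, id, QQ_succ]
  by_cases hz : z ∈ Set.Icc (0:ℝ) (1 - a)
  · have : KK a z := ⟨ha, ⟨hz.1, by linarith [hz.2, ha.1]⟩, by linarith [hz.2]⟩
    simp [hz, this]
  · have : ¬ KK a z := fun h => hz ⟨h.2.1.1, by linarith [h.2.2]⟩
    simp [hz, this]

lemma lint (f : ℝ → ℝ) (hf : Continuous f) (c : ℝ) (hc : 0 ≤ c) (h0 : ∀ z ∈ Set.Icc 0 c, 0 ≤ f z) :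
    ∫⁻ z in Set.Icc 0 c, ENNReal.ofReal (f z) = ENNReal.ofReal (∫ z in (0:ℝ)..c, f z) := by
  rw [intervalIntegral.integral_of_le hc, ← integral_Icc_eq_integral_Ioc,
    ofReal_integral_eq_lintegral_ofReal (hf.integrableOn_Icc)]
  exact (ae_restrict_iff' measurableSet_Icc).mpr (Filter.Eventually.of_forall h0)

lemma QQ_vol (n : ℕ) (b : ℝ) (hb : b ∈ Set.Icc (0:ℝ) 1) : ∀ a ∈ Set.Icc (0:ℝ) 1,
    0 ≤ Psi (n + 2) a b ∧
    volume {x : Fin (n + 1) → ℝ | QQ (n + 1) a x b} = ENNReal.ofReal (Psi (n + 2) a b) := by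
  induction n with
  | zero =>
    intro a ha
    rw [zero_add, Psi_two a b ha hb]
    refine ⟨le_min (by linarith [ha.2]) (by linarith [hb.2]), ?_⟩
    rw [QQ_rec _ _ _ ha]
    have e : ∀ z ∈ Set.Icc (0:ℝ) (1 - a), volume {t : Fin 0 → ℝ | QQ 0 z t b} =
        (Set.Icc (0:ℝ) (1 - b)).indicator 1 z := by
      intro z hz
      simp only [QQ_zero]
      by_cases hz' : z ∈ Set.Icc (0:ℝ) (1 - b)
      · have : KK z b := ⟨⟨hz.1, by linarith [hz'.2, hb.1]⟩, hb, by linarith [hz'.2]⟩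
        simp [hz', this, volume_pi, Measure.pi_of_empty]
      · have : ¬ KK z b := fun h => hz' ⟨h.1.1, by linarith [h.2.2]⟩
        simp [hz', this]
    rw [setLIntegral_congr_fun measurableSet_Icc e, lintegral_indicator_one measurableSet_Icc,
      Measure.restrict_apply measurableSet_Icc, Set.Icc_inter_Icc, Real.volume_Icc]
    simp [min_comm]
  | succ n ih =>
    intro a ha
    have hsub : ∀ z ∈ Set.Icc (0:ℝ) (1 - a), z ∈ Set.Icc (0:ℝ) 1 :=
      fun z hz => ⟨hz.1, by linarith [hz.2, ha.1]⟩
    have hc : (0:ℝ) ≤ 1 - a := by linarith [ha.2]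
    have hP := Psi_succ (n + 2) (by omega) a b
    constructor
    · rw [show n + 1 + 2 = n + 2 + 1 by ring, ← hP]
      exact intervalIntegral.integral_nonneg hc (fun z hz => (ih z (hsub z hz)).1)
    · rw [QQ_rec _ _ _ ha,
        setLIntegral_congr_fun measurableSet_Icc (fun z hz => (ih z (hsub z hz)).2),
        lint (fun z => Psi (n + 2) z b) ?_ _ hc (fun z hz => (ih z (hsub z hz)).1), hP]
      exact Continuous.comp (g := fun p : ℝ × ℝ => Psi (n + 2) p.1 p.2) (f := fun z => (z, b))
        (Psi_cont (n + 2) (by omega)) (by fun_prop)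

lemma snoc_eq (n : ℕ) (a : ℝ) (t : Fin n → ℝ) (i : Fin (n + 1)) :
    (Fin.snoc t a : Fin (n + 1) → ℝ) i =
    (Fin.cons a t : Fin (n + 1) → ℝ) ⟨((i : ℕ) + 1) % (n + 1), Nat.mod_lt _ (by omega)⟩ := by
  refine Fin.lastCases ?_ (fun j => ?_) i
  · have : (⟨((Fin.last n : ℕ) + 1) % (n + 1), Nat.mod_lt _ (by omega)⟩ : Fin (n + 1)) = 0 := by
      ext; simp
    rw [this]; simp
  · have : (⟨((j.castSucc : ℕ) + 1) % (n + 1), Nat.mod_lt _ (by omega)⟩ : Fin (n + 1)) = j.succ := by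
      ext; simp
    rw [this]; simp

lemma cyc_mem (n : ℕ) (hn : 1 ≤ n) (a : ℝ) (t : Fin n → ℝ) :
    ((∀ i, (Fin.cons a t : Fin (n + 1) → ℝ) i ∈ Set.Icc (0:ℝ) 1) ∧
      ∀ ⦃i j⦄, (cycG (n + 1)).Adj i j →
        (Fin.cons a t : Fin (n + 1) → ℝ) i + (Fin.cons a t : Fin (n + 1) → ℝ) j ≤ 1) ↔
    QQ n a t a := by
  unfold QQ
  simp only [snoc_eq]
  generalize (Fin.cons a t : Fin (n + 1) → ℝ) = x
  constructor
  · rintro ⟨h1, h2⟩ i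
    refine ⟨h1 _, h1 _, h2 ?_⟩
    rw [cycG, SimpleGraph.fromRel_adj]
    refine ⟨fun h => ?_, Or.inl rfl⟩
    have h3 := congrArg Fin.val h
    simp only at h3
    have hi := i.2
    rcases Nat.lt_or_ge ((i : ℕ) + 1) (n + 1) with h4 | h4
    · rw [Nat.mod_eq_of_lt h4] at h3; omega
    · have : (i : ℕ) + 1 = n + 1 := by omega
      rw [this, Nat.mod_self] at h3; omega
  · intro h
    refine ⟨fun i => (h i).1, fun i j hij => ?_⟩
    rw [cycG, SimpleGraph.fromRel_adj] at hij
    rcases hij.2 with h1 | h1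
    · have h2 := (h i).2.2
      simp only [h1] at h2
      exact h2
    · have h2 := (h j).2.2
      simp only [h1] at h2
      linarith

lemma gvol_cyc (n : ℕ) : gvol (cycG (n + 2)) = ∑' k, (1 / cc k) ^ (n + 2) := by
  unfold gvol
  have hSm : MeasurableSet {x : Fin (n + 2) → ℝ | (∀ i, x i ∈ Set.Icc (0:ℝ) 1) ∧
      ∀ ⦃i j⦄, (cycG (n + 2)).Adj i j → x i + x j ≤ 1} := by
    have : {x : Fin (n + 2) → ℝ | (∀ i, x i ∈ Set.Icc (0:ℝ) 1) ∧
      ∀ ⦃i j⦄, (cycG (n + 2)).Adj i j → x i + x j ≤ 1} =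
      {x | QQ (n + 1) (x 0) (Fin.tail x) (x 0)} := by
      ext x
      simp only [Set.mem_ofPred_eq]
      rw [← cyc_mem (n + 1) (by omega), Fin.cons_self_tail]
    rw [this]
    refine QQ_meas _ _ _ _ (measurable_pi_apply 0) ?_ (measurable_pi_apply 0)
    exact measurable_pi_iff.mpr (fun i => measurable_pi_apply _)
  rw [vol_succ _ _ hSm]
  simp only [Set.mem_ofPred_eq]
  simp only [cyc_mem (n + 1) (by omega)]
  have e : ∀ z : ℝ, volume {t : Fin (n + 1) → ℝ | QQ (n + 1) z t z} =
      (Set.Icc (0:ℝ) 1).indicator (fun z => ENNReal.ofReal (Psi (n + 2) z z)) z := by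
    intro z
    by_cases hz : z ∈ Set.Icc (0:ℝ) 1
    · rw [Set.indicator_of_mem hz, (QQ_vol n z hz z hz).2]
    · rw [Set.indicator_of_notMem hz]
      have : ∀ t : Fin (n + 1) → ℝ, ¬ QQ (n + 1) z t z := fun t h => hz (h 0).1
      simp [this]
  simp only [e]
  rw [lintegral_indicator measurableSet_Icc, lint (fun z => Psi (n + 2) z z) ?_ _ zero_le_one, Psi_trace _ (by omega),
    ENNReal.toReal_ofReal]
  · rw [← Psi_trace _ (by omega)]
    exact intervalIntegral.integral_nonneg zero_le_one (fun z hz => (QQ_vol n z hz z hz).1)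
  · exact fun z hz => (QQ_vol n z hz z hz).1
  · exact Continuous.comp (g := fun p : ℝ × ℝ => Psi (n + 2) p.1 p.2) (f := fun z => (z, z))
        (Psi_cont (n + 2) (by omega)) (by fun_prop)

/-- For `n ≥ 3`, `Σ_{k ∈ ℤ} 1/(4k+1)ⁿ = πⁿ·vol(C_n)/2ⁿ` (absolutely convergent);
in particular `1 - 1/3³ + 1/5³ - 1/7³ + ⋯ = π³/32` and
`1 + 1/3⁴ + 1/5⁴ + 1/7⁴ + ⋯ = π⁴/96`. -/
theorem sum_inv_fourKPlusOne_pow :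
    (∀ n : ℕ, 3 ≤ n →
      Summable (fun k : ℤ => |(1 : ℝ) / ((4 * k + 1 : ℤ) : ℝ) ^ n|) ∧
      ∑' k : ℤ, (1 : ℝ) / ((4 * k + 1 : ℤ) : ℝ) ^ n =
        π ^ n * gvol (cycG n) / 2 ^ n) ∧
    (∑' m : ℕ, (-1 : ℝ) ^ m / ((2 * m + 1 : ℕ) : ℝ) ^ 3 = π ^ 3 / 32) ∧
    (∑' m : ℕ, (1 : ℝ) / ((2 * m + 1 : ℕ) : ℝ) ^ 4 = π ^ 4 / 96) := by
  refine ⟨fun n hn => ⟨summ_abs n (by omega), ?_⟩, spec3, spec4⟩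
  obtain ⟨m, rfl⟩ : ∃ m, n = m + 2 := ⟨n - 2, by omega⟩
  rw [gvol_cyc]
  simp_rw [one_div_cc]
  rw [tsum_mul_left, div_pow]
  have := Real.pi_ne_zero
  field_simp
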